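/- Let μ, ν ∈ 𝓜 with μ ≤_pcd ν, and let h : ℝ → ℝ be the convex hull of the function P_ν − P_μ. Then there exists a unique shadow S of μ in ν, and this shadow satisfies P_S(k) = P_ν(k) − h(k) for all k ∈ ℝ. -/

import Mathlib

open MeasureTheory Set Filter

noncomputable section

/-- `η ∈ 𝓜`: a finite Borel measure on ℝ with finite first moment. -/
def MemM (η : MeasureTheory.Measure ℝ) : Prop :=
  MeasureTheory.IsFiniteMeasure η ∧ MeasureTheory.Integrable (fun x : ℝ => x) η

/-- Convex-decreasing order `≤_cd`. -/
def LeCD (η χ : MeasureTheory.Measure ℝ) : Prop :=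
  ∀ f : ℝ → ℝ, ConvexOn ℝ Set.univ f → Antitone f →
    MeasureTheory.Integrable f η → MeasureTheory.Integrable f χ →
    ∫ x, f x ∂η ≤ ∫ x, f x ∂χ

/-- Positive convex-decreasing order `≤_pcd`. -/
def LePCD (η χ : MeasureTheory.Measure ℝ) : Prop :=
  ∀ f : ℝ → ℝ, (∀ x, 0 ≤ f x) → ConvexOn ℝ Set.univ f → Antitone f →
    MeasureTheory.Integrable f η → MeasureTheory.Integrable f χ →
    ∫ x, f x ∂η ≤ ∫ x, f x ∂χ

/-- Positive convex order `≤_pc`. -/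
def LePC (η χ : MeasureTheory.Measure ℝ) : Prop :=
  ∀ f : ℝ → ℝ, (∀ x, 0 ≤ f x) → ConvexOn ℝ Set.univ f →
    MeasureTheory.Integrable f η → MeasureTheory.Integrable f χ →
    ∫ x, f x ∂η ≤ ∫ x, f x ∂χ

/-- A supermartingale coupling of `η` and `χ`. -/
def IsSupermartingaleCoupling (η χ : MeasureTheory.Measure ℝ)
    (π : MeasureTheory.Measure (ℝ × ℝ)) : Prop :=
  MeasureTheory.IsProbabilityMeasure π ∧
  π.map Prod.fst = η ∧ π.map Prod.snd = χ ∧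
  MeasureTheory.Integrable (fun p : ℝ × ℝ => p.2) π ∧
  ∀ B : Set ℝ, MeasurableSet B →
    ∫ p in B ×ˢ (Set.univ : Set ℝ), (p : ℝ × ℝ).2 ∂π ≤ ∫ x in B, x ∂η

/-- The potential function `P_η(k) = ∫ (k-x)⁺ η(dx)`. -/
def Ppot (η : MeasureTheory.Measure ℝ) (k : ℝ) : ℝ := ∫ x, max (k - x) 0 ∂η

/-- The potential function `C_η(k) = ∫ (x-k)⁺ η(dx)`. -/
def Cpot (η : MeasureTheory.Measure ℝ) (k : ℝ) : ℝ := ∫ x, max (x - k) 0 ∂η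

/-- The left-continuous quantile function `G_η(u) = sup {k | η((-∞,k]) < u}`. -/
def quantile (η : MeasureTheory.Measure ℝ) (u : ℝ) : ℝ :=
  sSup {k : ℝ | (η (Set.Iic k)).toReal < u}

/-- The lift `μ_u = μ|_{(-∞,G(u))} + (u - μ((-∞,G(u)))) δ_{G(u)}`, with `μ_0 = 0`, `μ_1 = μ`. -/
def muU (μ : MeasureTheory.Measure ℝ) (u : ℝ) : MeasureTheory.Measure ℝ :=
  if u ≤ 0 then 0
  else if 1 ≤ u then μ
  else μ.restrict (Set.Iio (quantile μ u)) +
    (ENNReal.ofReal (u - (μ (Set.Iio (quantile μ u))).toReal)) •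
      MeasureTheory.Measure.dirac (quantile μ u)

/-- `S` is a shadow of `μ` in `ν`. -/
def IsShadow (μ ν S : MeasureTheory.Measure ℝ) : Prop :=
  MemM S ∧ LeCD μ S ∧ (∀ A : Set ℝ, MeasurableSet A → S A ≤ ν A) ∧
  ∀ η : MeasureTheory.Measure ℝ, MemM η → LeCD μ η →
    (∀ A : Set ℝ, MeasurableSet A → η A ≤ ν A) → LeCD S η

/-- `h` is the convex hull of `f`. -/
def IsConvexHullFn (f h : ℝ → ℝ) : Prop :=
  ConvexOn ℝ Set.univ h ∧ (∀ x, h x ≤ f x) ∧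
  ∀ g : ℝ → ℝ, ConvexOn ℝ Set.univ g → (∀ x, g x ≤ f x) → ∀ x, g x ≤ h x

/-- The class `𝒟(a,b)`. -/
def MemD (a b : ℝ) (f : ℝ → ℝ) : Prop :=
  (∀ x, 0 ≤ f x) ∧ Monotone f ∧ ConvexOn ℝ Set.univ f ∧
  Filter.Tendsto f Filter.atBot (nhds 0) ∧
  Filter.Tendsto (fun z => f z - (a * z - b)) Filter.atTop (nhds 0)

/-- The topological support of a measure. -/
def msupport (η : MeasureTheory.Measure ℝ) : Set ℝ :=
  {x : ℝ | ∀ U ∈ nhds x, η U ≠ 0}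

/-!
A measure in `𝓜` is determined by its potential, and every convex function vanishing at `-∞` is the
potential of a measure, namely of its second derivative. Two translations make this useful:
`η ≤_cd χ` holds iff the total masses agree and `P_η ≤ P_χ` pointwise (write a convex non-increasing
test function as a reflected potential and apply Fubini), and `η ≤ ν` holds iff `P_ν - P_η` is
convex. The potential of the shadow is therefore the smallest `p ≥ P_μ` such that `P_ν - p` is
convex, that is, `P_ν` minus the largest convex minorant `h` of `P_ν - P_μ`. What has to be checked
is that `P_ν - h` is itself convex, so that it is a potential, and that its measure has the mass of
`μ`: comparing `h` with a multiple of `k⁺` shows that `P_ν - h` stays within a bounded distance of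
`P_μ`, and the mass is the slope of the potential at `+∞`.
-/

open scoped Topology

section Convex

variable {f g v : ℝ → ℝ} {s : Set ℝ}

theorem concaveOn_mul_add_const (m c : ℝ) (hs : Convex ℝ s) : ConcaveOn ℝ s fun x => m * x + c :=
  (((LinearMap.mulLeft ℝ m).concaveOn hs).add_const c)

theorem convexOn_iff_forall_le_affine :
    ConvexOn ℝ s f ↔ Convex ℝ s ∧ ∀ m c : ℝ, ∀ p ∈ s, ∀ q ∈ s, f p ≤ m * p + c →
      f q ≤ m * q + c → ∀ w ∈ Icc p q, f w ≤ m * w + c := by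
  refine ⟨fun hf => ⟨hf.1, fun m c p hp q hq hfp hfq w hw => ?_⟩, fun ⟨hs, hf⟩ => ?_⟩
  · have hmax := (hf.sub (concaveOn_mul_add_const m c hf.1)).le_max_of_mem_Icc hp hq hw
    exact sub_nonpos.1 (hmax.trans (max_le (sub_nonpos.2 hfp) (sub_nonpos.2 hfq)))
  · refine LinearOrder.convexOn_of_lt hs fun p hp q hq hpq a b ha hb hab => ?_
    have hchord : slope f p q * (q - p) = f q - f p := by
      rw [mul_comm, ← smul_eq_mul, sub_smul_slope]
      rfl
    have hw := hf (slope f p q) (f p - slope f p q * p) p hp q hq (by linarith) (by linarith)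
      (a • p + b • q) (convex_Icc p q (left_mem_Icc.2 hpq.le) (right_mem_Icc.2 hpq.le)
        ha.le hb.le hab)
    obtain rfl : a = 1 - b := by linarith
    simp only [smul_eq_mul] at hw ⊢
    linear_combination hw + b * hchord

theorem convexOn_ite_max {x y : ℝ} (hf : ConvexOn ℝ s f) (hv : ConvexOn ℝ (Icc x y) v)
    (hx : v x ≤ f x) (hy : v y ≤ f y) :
    ConvexOn ℝ s fun t => if t ∈ Icc x y then max (f t) (v t) else f t := by
  set u := fun t => if t ∈ Icc x y then max (f t) (v t) else f t with hu
  have hfu : ∀ t, f t ≤ u t := fun t => by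
    simp only [hu]
    split_ifs
    exacts [le_max_left _ _, le_rfl]
  have hvu : ∀ t ∈ Icc x y, v t ≤ u t := fun t ht => by
    simp only [hu, if_pos ht, le_max_right]
  refine convexOn_iff_forall_le_affine.2 ⟨hf.1, fun m c p hps q hqs hp hq w hw => ?_⟩
  have hfL : ∀ t ∈ Icc p q, f t ≤ m * t + c :=
    (convexOn_iff_forall_le_affine.1 hf).2 m c p hps q hqs
      ((hfu p).trans hp) ((hfu q).trans hq)
  by_cases hwxy : w ∈ Icc x y
  · have hvleft : v (max p x) ≤ m * max p x + c := by
      rcases le_total p x with hpx | hxp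
      · rw [max_eq_right hpx]
        exact hx.trans (hfL x ⟨hpx, hwxy.1.trans hw.2⟩)
      · rw [max_eq_left hxp]
        exact (hvu p ⟨hxp, hw.1.trans hwxy.2⟩).trans hp
    have hvright : v (min q y) ≤ m * min q y + c := by
      rcases le_total q y with hqy | hyq
      · rw [min_eq_left hqy]
        exact (hvu q ⟨hwxy.1.trans hw.2, hqy⟩).trans hq
      · rw [min_eq_right hyq]
        exact hy.trans (hfL y ⟨hw.1.trans hwxy.2, hyq⟩)
    have hmaxw : max p x ≤ w := max_le hw.1 hwxy.1
    have hwmin : w ≤ min q y := le_min hw.2 hwxy.2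
    simp only [hu, if_pos hwxy]
    exact max_le (hfL w hw) <| (convexOn_iff_forall_le_affine.1 hv).2 m c
      _ ⟨le_max_right p x, hmaxw.trans hwxy.2⟩ _ ⟨hwxy.1.trans hwmin, min_le_right q y⟩
      hvleft hvright w ⟨hmaxw, hwmin⟩
  · simp only [hu, if_neg hwxy]
    exact hfL w hw

-- If `L` is affine and dominates `f - h` at `x` and `y`, then raising `h` to `max h (f - L)` on
-- `[x, y]` keeps it a convex minorant of `f - g`, so by maximality `h` was not raised at all.
theorem IsConvexHullFn.convexOn_sub {h : ℝ → ℝ} (hh : IsConvexHullFn (fun k => f k - g k) h)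
    (hf : ConvexOn ℝ univ f) (hg : ConvexOn ℝ univ g) : ConvexOn ℝ univ fun k => f k - h k := by
  obtain ⟨hconv, hle, hmax⟩ := hh
  refine convexOn_iff_forall_le_affine.2 ⟨convex_univ, fun m c x _ y _ hx hy w hw => ?_⟩
  have hgL : ∀ t ∈ Icc x y, g t ≤ m * t + c :=
    (convexOn_iff_forall_le_affine.1 hg).2 m c x trivial y trivial
      (by linarith [hle x]) (by linarith [hle y])
  have hraised : ConvexOn ℝ univ fun t =>
      if t ∈ Icc x y then max (h t) (f t - (m * t + c)) else h t :=
    convexOn_ite_max hconv ((hf.subset (subset_univ _) (convex_Icc x y)).sub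
      (concaveOn_mul_add_const m c (convex_Icc x y))) (by linarith) (by linarith)
  have hminorant : ∀ t, (if t ∈ Icc x y then max (h t) (f t - (m * t + c)) else h t)
      ≤ f t - g t := fun t => by
    split_ifs with ht
    · exact max_le (hle t) (sub_le_sub_left (hgL t ht) _)
    · exact hle t
  have hw' := hmax _ hraised hminorant w
  rw [if_pos hw, max_le_iff] at hw'
  linarith [hw'.2]

theorem monotone_rightDeriv (hf : ConvexOn ℝ univ f) :
    Monotone fun x => derivWithin f (Ioi x) x := by
  simpa only [interior_univ, monotoneOn_univ] using hf.monotoneOn_rightDeriv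

theorem rightDeriv_nonneg_of_tendsto_atBot {l : ℝ} (hf : ConvexOn ℝ univ f)
    (hl : Tendsto f atBot (𝓝 l)) (x : ℝ) : 0 ≤ derivWithin f (Ioi x) x := by
  have hslope : Tendsto (fun y => slope f y x) atBot (𝓝 0) := by
    simp only [slope_def_field]
    exact (tendsto_const_nhds.sub hl).div_atTop
      (tendsto_atTop_add_const_left atBot x tendsto_neg_atBot_atTop)
  refine le_of_tendsto hslope ?_
  filter_upwards [eventually_lt_atBot x] with y hy
  exact (hf.slope_le_leftDeriv_of_mem_interior (mem_univ y) (by simp) hy).trans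
    (hf.leftDeriv_le_rightDeriv_of_mem_interior (by simp))

theorem tendsto_rightDeriv_atBot {l : ℝ} (hf : ConvexOn ℝ univ f) (hl : Tendsto f atBot (𝓝 l)) :
    Tendsto (fun x => derivWithin f (Ioi x) x) atBot (𝓝 0) := by
  have hdiff : Tendsto (fun x => f (x + 1) - f x) atBot (𝓝 0) := by
    simpa using (hl.comp (tendsto_atBot_add_const_right atBot 1 tendsto_id)).sub hl
  refine squeeze_zero (rightDeriv_nonneg_of_tendsto_atBot hf hl) (fun x => ?_) hdiff
  simpa [slope_def_field] using
    hf.rightDeriv_le_slope_of_mem_interior (by simp) (mem_univ (x + 1)) (lt_add_one x)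

theorem intervalIntegral_rightDeriv (hf : ConvexOn ℝ univ f) (a b : ℝ) :
    ∫ t in a..b, derivWithin f (Ioi t) t = f b - f a :=
  intervalIntegral.integral_eq_sub_of_hasDeriv_right
    ((hf.continuousOn isOpen_univ).mono (subset_univ _))
    (fun _ _ => hf.hasDerivWithinAt_rightDeriv_of_mem_interior (by simp))
    (monotone_rightDeriv hf).intervalIntegrable

theorem le_of_convexOn_of_tendsto_atBot {l : ℝ} (hf : ConvexOn ℝ univ f)
    (hl : Tendsto f atBot (𝓝 l)) (k : ℝ) : l ≤ f k := by
  refine le_of_tendsto hl ?_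
  filter_upwards [eventually_le_atBot k] with a hak
  rw [← sub_nonneg, ← intervalIntegral_rightDeriv hf]
  exact intervalIntegral.integral_nonneg hak fun t _ =>
    rightDeriv_nonneg_of_tendsto_atBot hf hl t

theorem lintegral_Iic_rightDeriv {l : ℝ} (hf : ConvexOn ℝ univ f)
    (hl : Tendsto f atBot (𝓝 l)) (k : ℝ) :
    ∫⁻ t in Iic k, ENNReal.ofReal (derivWithin f (Ioi t) t) = ENNReal.ofReal (f k - l) := by
  have hnonneg := rightDeriv_nonneg_of_tendsto_atBot hf hl
  have hlim : Tendsto (fun a => ∫ t in a..k, derivWithin f (Ioi t) t) atBot (𝓝 (f k - l)) := by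
    simp only [intervalIntegral_rightDeriv hf]
    exact tendsto_const_nhds.sub hl
  have hint : IntegrableOn (fun t => derivWithin f (Ioi t) t) (Iic k) :=
    integrableOn_Iic_of_intervalIntegral_norm_tendsto (f k - l) k
      (fun a => (monotone_rightDeriv hf).locallyIntegrable.integrableOn_isCompact
        isCompact_Icc |>.mono_set Ioc_subset_Icc_self) tendsto_id
      (by simpa only [Real.norm_of_nonneg (hnonneg _), id_eq] using hlim)
  rw [← ofReal_integral_eq_lintegral_ofReal hint (Eventually.of_forall hnonneg),
    tendsto_nhds_unique (intervalIntegral_tendsto_integral_Iic k hint tendsto_id) hlim]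

end Convex

section Potential

variable {η χ : Measure ℝ}

theorem convexOn_max_sub_zero (k : ℝ) : ConvexOn ℝ univ fun x : ℝ => max (k - x) 0 :=
  ((convexOn_const k convex_univ).sub (concaveOn_id convex_univ)).sup (convexOn_const 0 convex_univ)

theorem antitone_max_sub_zero (k : ℝ) : Antitone fun x : ℝ => max (k - x) 0 :=
  fun _ _ hxy => max_le_max_right 0 (sub_le_sub_left hxy k)

/-- The potential integrals `∫ (k - x)⁺ η(dx)` converge. This holds on `𝓜`, but also for some
infinite measures, such as the second derivative of a superlinear convex function. -/
def HasFinitePotential (η : Measure ℝ) : Prop :=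
  ∀ k : ℝ, Integrable (fun x : ℝ => max (k - x) 0) η

theorem MemM.mono (hχ : MemM χ) (h : η ≤ χ) : MemM η :=
  have := hχ.1
  ⟨isFiniteMeasure_of_le χ h, hχ.2.mono_measure h⟩

theorem MemM.hasFinitePotential (hη : MemM η) : HasFinitePotential η := fun k =>
  have := hη.1
  ((integrable_const k).sub hη.2).sup (integrable_const 0)

namespace HasFinitePotential

theorem add (hη : HasFinitePotential η) (hχ : HasFinitePotential χ) :
    HasFinitePotential (η + χ) := fun k => (hη k).add_measure (hχ k)

theorem measure_Iic_lt_top (hη : HasFinitePotential η) (k : ℝ) : η (Iic k) < ⊤ := by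
  refine (measure_mono fun x hx => ?_).trans_lt ((hη (k + 1)).measure_ge_lt_top one_pos)
  have hxk : x ≤ k := hx
  exact le_max_of_le_left (show 1 ≤ k + 1 - x by linarith)

theorem sigmaFinite (hη : HasFinitePotential η) : SigmaFinite η :=
  ⟨⟨fun n : ℕ => Iic (n : ℝ), fun _ => trivial, fun n => hη.measure_Iic_lt_top n,
    iUnion_Iic_of_not_bddAbove_range (not_bddAbove_iff.2 fun x =>
      (exists_nat_gt x).imp' _ fun _ h => ⟨mem_range_self _, h⟩)⟩⟩

theorem convexOn_Ppot (hη : HasFinitePotential η) : ConvexOn ℝ univ (Ppot η) := by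
  refine ⟨convex_univ, fun k _ l _ a b ha hb hab => ?_⟩
  have hpayoff : ∀ x : ℝ, ConvexOn ℝ univ fun k : ℝ => max (k - x) 0 := fun x =>
    ((convexOn_id convex_univ).sub (concaveOn_const x convex_univ)).sup
      (convexOn_const 0 convex_univ)
  simp only [Ppot, smul_eq_mul]
  rw [← integral_const_mul, ← integral_const_mul,
    ← integral_add ((hη k).const_mul a) ((hη l).const_mul b)]
  exact integral_mono (hη _) (((hη k).const_mul a).add ((hη l).const_mul b)) fun x =>
    (hpayoff x).2 trivial trivial ha hb hab

theorem tendsto_Ppot_atBot (hη : HasFinitePotential η) : Tendsto (Ppot η) atBot (𝓝 0) := by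
  rw [← integral_zero ℝ ℝ (μ := η)]
  refine tendsto_integral_filter_of_dominated_convergence (fun x => max (0 - x) 0)
    (Eventually.of_forall fun k => (hη k).aestronglyMeasurable) ?_ (hη 0)
    (Eventually.of_forall fun x => tendsto_const_nhds.congr' ?_)
  · filter_upwards [eventually_le_atBot 0] with k hk
    refine Eventually.of_forall fun x => ?_
    rw [Real.norm_of_nonneg (le_max_right _ _)]
    exact max_le_max_right 0 (sub_le_sub_right hk x)
  · filter_upwards [eventually_le_atBot x] with k hk
    exact (max_eq_right (sub_nonpos.2 hk)).symm

theorem Ppot_add (hη : HasFinitePotential η) (hχ : HasFinitePotential χ) (k : ℝ) :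
    Ppot (η + χ) k = Ppot η k + Ppot χ k :=
  integral_add_measure (hη k) (hχ k)

theorem ofReal_Ppot (hη : HasFinitePotential η) (k : ℝ) :
    ENNReal.ofReal (Ppot η k) = ∫⁻ x, ENNReal.ofReal (max (k - x) 0) ∂η :=
  ofReal_integral_eq_lintegral_ofReal (hη k) (Eventually.of_forall fun _ => le_max_right _ _)

theorem mul_real_Iic_le_Ppot_sub (hη : HasFinitePotential η) {k l : ℝ} (hkl : k ≤ l) :
    (l - k) * η.real (Iic k) ≤ Ppot η l - Ppot η k := by
  have hint : Integrable ((Iic k).indicator fun _ => l - k) η :=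
    (integrable_indicator_iff measurableSet_Iic).2
      (integrableOn_const (hη.measure_Iic_lt_top k).ne)
  rw [mul_comm, ← smul_eq_mul, ← integral_indicator_const _ measurableSet_Iic, Ppot, Ppot,
    ← integral_sub (hη l) (hη k)]
  refine integral_mono hint ((hη l).sub (hη k)) fun x => indicator_apply_le' (fun hx => ?_)
    fun _ => sub_nonneg.2 (max_le_max_right 0 (sub_le_sub_right hkl x))
  have hxk : x ≤ k := hx
  rw [max_eq_left (sub_nonneg.2 (hxk.trans hkl)), max_eq_left (sub_nonneg.2 hxk)]
  linarith

theorem Ppot_sub_le_mul_real_Iic (hη : HasFinitePotential η) {k l : ℝ} (hkl : k ≤ l) :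
    Ppot η l - Ppot η k ≤ (l - k) * η.real (Iic l) := by
  have hint : Integrable ((Iic l).indicator fun _ => l - k) η :=
    (integrable_indicator_iff measurableSet_Iic).2
      (integrableOn_const (hη.measure_Iic_lt_top l).ne)
  rw [mul_comm, ← smul_eq_mul, ← integral_indicator_const _ measurableSet_Iic, Ppot, Ppot,
    ← integral_sub (hη l) (hη k)]
  refine integral_mono ((hη l).sub (hη k)) hint fun x => le_indicator_apply (fun _ => ?_)
    fun hx => ?_
  · calc max (l - x) 0 - max (k - x) 0 ≤ |(l - x) - (k - x)| :=
          (le_abs_self _).trans (abs_max_sub_max_le_abs _ _ _)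
      _ = l - k := by rw [sub_sub_sub_cancel_right, abs_of_nonneg (sub_nonneg.2 hkl)]
  · have hlx : l ≤ x := (not_le.1 hx).le
    rw [max_eq_right (sub_nonpos.2 hlx), zero_sub]
    exact neg_nonpos.2 (le_max_right _ _)

theorem tendsto_real_Iic_nhdsGT (hη : HasFinitePotential η) (k : ℝ) :
    Tendsto (fun l => η.real (Iic l)) (𝓝[>] k) (𝓝 (η.real (Iic k))) := by
  have hlim := tendsto_measure_biInter_gt (μ := η) (s := Iic) (a := k)
    (fun _ _ => nullMeasurableSet_Iic) (fun _ _ _ => Iic_subset_Iic.2)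
    ⟨k + 1, lt_add_one k, (hη.measure_Iic_lt_top _).ne⟩
  have hinter : ⋂ l > k, Iic l = Iic k := by
    ext x
    simp only [mem_iInter, mem_Iic]
    exact forall_gt_imp_ge_iff_le_of_dense
  rw [hinter] at hlim
  exact (ENNReal.tendsto_toReal (hη.measure_Iic_lt_top k).ne).comp hlim

theorem real_Iic_le_of_Ppot_eq (hη : HasFinitePotential η) (hχ : HasFinitePotential χ)
    (h : Ppot η = Ppot χ) (k : ℝ) : η.real (Iic k) ≤ χ.real (Iic k) := by
  refine ge_of_tendsto (hχ.tendsto_real_Iic_nhdsGT k) ?_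
  filter_upwards [self_mem_nhdsWithin] with l (hkl : k < l)
  refine le_of_mul_le_mul_left ?_ (sub_pos.2 hkl)
  exact (hη.mul_real_Iic_le_Ppot_sub hkl.le).trans (h ▸ hχ.Ppot_sub_le_mul_real_Iic hkl.le)

theorem eq_of_Ppot_eq [IsFiniteMeasure η] (hη : HasFinitePotential η)
    (hχ : HasFinitePotential χ) (h : Ppot η = Ppot χ) : η = χ :=
  Measure.ext_of_Iic η χ fun k =>
    (measureReal_eq_measureReal_iff (measure_ne_top _ _) (hχ.measure_Iic_lt_top k).ne).1 <|
      (hη.real_Iic_le_of_Ppot_eq hχ h k).antisymm (hχ.real_Iic_le_of_Ppot_eq hη h.symm k)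

theorem lintegral_ofReal_Ppot_neg (hη : HasFinitePotential η) (hχ : HasFinitePotential χ) :
    ∫⁻ x, ENNReal.ofReal (Ppot χ (-x)) ∂η = ∫⁻ z, ENNReal.ofReal (Ppot η (-z)) ∂χ := by
  have := hη.sigmaFinite
  have := hχ.sigmaFinite
  simp only [hη.ofReal_Ppot, hχ.ofReal_Ppot]
  rw [lintegral_lintegral_swap (by fun_prop)]
  simp only [sub_eq_add_neg, add_comm]

end HasFinitePotential

theorem lintegral_max_sub_zero_eq_lintegral_measure_Iic [SFinite η] (k : ℝ) :
    ∫⁻ x, ENNReal.ofReal (max (k - x) 0) ∂η = ∫⁻ t in Iic k, η (Iic t) := by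
  have hvol : ∀ x, ENNReal.ofReal (max (k - x) 0) =
      ∫⁻ t in Iic k, (Iic t).indicator 1 x := fun x => by
    have hind : ∀ t, (Iic t).indicator (1 : ℝ → ENNReal) x = (Ici x).indicator 1 t :=
      fun t => rfl
    simp_rw [hind]
    rw [lintegral_indicator_one measurableSet_Ici, Measure.restrict_apply measurableSet_Ici,
      Ici_inter_Iic, Real.volume_Icc, ENNReal.ofReal_max, ENNReal.ofReal_zero, max_eq_left]
    exact zero_le
  have hmeas : Measurable fun p : ℝ × ℝ => (Iic p.2).indicator (1 : ℝ → ENNReal) p.1 :=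
    measurable_one.indicator (measurableSet_le measurable_fst measurable_snd)
  simp_rw [hvol]
  rw [lintegral_lintegral_swap hmeas.aemeasurable]
  simp only [lintegral_indicator_one measurableSet_Iic]

theorem exists_measure_Iic_ae_eq_rightDeriv {f : ℝ → ℝ} {l : ℝ} (hf : ConvexOn ℝ univ f)
    (hl : Tendsto f atBot (𝓝 l)) : ∃ m : Measure ℝ, SigmaFinite m ∧
      ∀ᵐ t, m (Iic t) = ENNReal.ofReal (derivWithin f (Ioi t) t) := by
  have hmono := monotone_rightDeriv hf
  have hlim : Tendsto hmono.stieltjesFunction atBot (𝓝 0) :=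
    tendsto_of_tendsto_of_tendsto_of_le_of_le (tendsto_rightDeriv_atBot hf hl)
      ((tendsto_rightDeriv_atBot hf hl).comp (tendsto_atBot_add_const_right atBot 1 tendsto_id))
      (fun t => hmono.le_rightLim le_rfl) (fun t => hmono.rightLim_le (lt_add_one t))
  refine ⟨hmono.stieltjesFunction.measure, inferInstance, ?_⟩
  filter_upwards [hmono.countable_not_continuousAt.ae_notMem volume] with t ht
  rw [StieltjesFunction.measure_Iic _ hlim, sub_zero, hmono.stieltjesFunction_eq,
    (not_not.1 ht).continuousWithinAt.rightLim_eq]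

theorem exists_hasFinitePotential_Ppot_eq {f : ℝ → ℝ} (hf : ConvexOn ℝ univ f)
    (hf0 : Tendsto f atBot (𝓝 0)) : ∃ m : Measure ℝ, HasFinitePotential m ∧ Ppot m = f := by
  obtain ⟨m, _, hm⟩ := exists_measure_Iic_ae_eq_rightDeriv hf hf0
  have hpot : ∀ k, ∫⁻ x, ENNReal.ofReal (max (k - x) 0) ∂m = ENNReal.ofReal (f k) := fun k => by
    rw [lintegral_max_sub_zero_eq_lintegral_measure_Iic, lintegral_congr_ae (ae_restrict_of_ae hm),
      lintegral_Iic_rightDeriv hf hf0, sub_zero]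
  have hfin : HasFinitePotential m := fun k =>
    (lintegral_ofReal_ne_top_iff_integrable (by fun_prop)
      (Eventually.of_forall fun _ => le_max_right _ _)).1 (hpot k ▸ ENNReal.ofReal_ne_top)
  refine ⟨m, hfin, funext fun k => ?_⟩
  refine (ENNReal.ofReal_eq_ofReal_iff (integral_nonneg fun _ => le_max_right _ _)
    (le_of_convexOn_of_tendsto_atBot hf hf0 k)).1 ((hfin.ofReal_Ppot k).trans (hpot k))

end Potential

section Order

variable {η χ μ ν : Measure ℝ}

theorem Ppot_nonneg (η : Measure ℝ) (k : ℝ) : 0 ≤ Ppot η k :=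
  integral_nonneg fun _ => le_max_right _ _

theorem integral_le_of_Ppot_le {g : ℝ → ℝ} (hη : HasFinitePotential η)
    (hχ : HasFinitePotential χ) (hP : ∀ k, Ppot η k ≤ Ppot χ k) (hg : ConvexOn ℝ univ g)
    (hg0 : Tendsto g atTop (𝓝 0)) (hgη : Integrable g η) (hgχ : Integrable g χ) :
    ∫ x, g x ∂η ≤ ∫ x, g x ∂χ := by
  obtain ⟨m, hm, hPm⟩ := exists_hasFinitePotential_Ppot_eq (f := fun y => g (-y))
    (hg.comp_linearMap (-LinearMap.id)) (hg0.comp tendsto_neg_atBot_atTop)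
  obtain rfl : (fun x => Ppot m (-x)) = g := by simp only [hPm, neg_neg]
  have hnonneg : ∀ x, 0 ≤ Ppot m (-x) := fun x => Ppot_nonneg m (-x)
  have hdual : ∫⁻ x, ENNReal.ofReal (Ppot m (-x)) ∂η ≤ ∫⁻ x, ENNReal.ofReal (Ppot m (-x)) ∂χ := by
    rw [hη.lintegral_ofReal_Ppot_neg hm, hχ.lintegral_ofReal_Ppot_neg hm]
    exact lintegral_mono fun z => ENNReal.ofReal_le_ofReal (hP (-z))
  rw [← ofReal_integral_eq_lintegral_ofReal hgη (Eventually.of_forall hnonneg),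
    ← ofReal_integral_eq_lintegral_ofReal hgχ (Eventually.of_forall hnonneg)] at hdual
  exact (ENNReal.ofReal_le_ofReal_iff (integral_nonneg hnonneg)).1 hdual

theorem MemM.abs_Ppot_sub_le (hη : MemM η) (k : ℝ) :
    |Ppot η k - max k 0 * η.real univ| ≤ ∫ x, |x| ∂η := by
  have := hη.1
  have hdiff : Ppot η k - max k 0 * η.real univ = ∫ x, (max (k - x) 0 - max k 0) ∂η := by
    rw [integral_sub (hη.hasFinitePotential k) (integrable_const _), integral_const, smul_eq_mul,
      mul_comm, Ppot]
  rw [hdiff]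
  refine abs_integral_le_integral_abs.trans (integral_mono
    ((hη.hasFinitePotential k).sub (integrable_const _)).abs hη.2.abs fun x => ?_)
  exact (abs_max_sub_max_le_abs _ _ _).trans_eq (by rw [sub_sub_cancel_left, abs_neg])

theorem MemM.tendsto_Ppot_div_atTop (hη : MemM η) :
    Tendsto (fun k => Ppot η k / k) atTop (𝓝 (η.real univ)) := by
  rw [tendsto_iff_norm_sub_tendsto_zero]
  refine squeeze_zero' (Eventually.of_forall fun _ => norm_nonneg _) ?_
    (tendsto_const_nhds.div_atTop tendsto_id : Tendsto (fun k => (∫ x, |x| ∂η) / k) atTop (𝓝 0))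
  filter_upwards [eventually_gt_atTop 0] with k hk
  have hbound := hη.abs_Ppot_sub_le k
  rw [max_eq_left hk.le] at hbound
  rwa [div_sub' hk.ne', norm_div, Real.norm_of_nonneg hk.le, Real.norm_eq_abs,
    div_le_div_iff_of_pos_right hk]

theorem MemM.real_univ_le_of_Ppot_le_add_const (hη : MemM η) (hχ : MemM χ) {C : ℝ}
    (h : ∀ k, Ppot η k ≤ Ppot χ k + C) : η.real univ ≤ χ.real univ := by
  have hC : Tendsto (fun k : ℝ => C / k) atTop (𝓝 0) := tendsto_const_nhds.div_atTop tendsto_id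
  have hlim := hχ.tendsto_Ppot_div_atTop.add hC
  rw [add_zero] at hlim
  refine le_of_tendsto_of_tendsto hη.tendsto_Ppot_div_atTop hlim ?_
  filter_upwards [eventually_gt_atTop 0] with k hk
  rw [← add_div]
  exact div_le_div_of_nonneg_right (h k) hk.le

theorem MemM.convexOn_Ppot_sub (hχ : MemM χ) (h : η ≤ χ) :
    ConvexOn ℝ univ fun k => Ppot χ k - Ppot η k := by
  have hη : MemM η := hχ.mono h
  have := hη.1
  have hres : HasFinitePotential (χ - η) := (hχ.mono Measure.sub_le).hasFinitePotential
  have hadd : ∀ k, Ppot χ k = Ppot (χ - η) k + Ppot η k := fun k => by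
    rw [← hres.Ppot_add hη.hasFinitePotential, Measure.sub_add_cancel_of_le h]
  simpa only [hadd, add_sub_cancel_right] using hres.convexOn_Ppot

theorem MemM.exists_le_Ppot_eq {f : ℝ → ℝ} (hν : MemM ν) (hf : ConvexOn ℝ univ f)
    (hνf : ConvexOn ℝ univ fun k => Ppot ν k - f k) (hf0 : Tendsto f atBot (𝓝 0)) :
    ∃ S ≤ ν, Ppot S = f := by
  have := hν.1
  obtain ⟨S, hS, rfl⟩ := exists_hasFinitePotential_Ppot_eq hf hf0
  obtain ⟨T, hT, hPT⟩ := exists_hasFinitePotential_Ppot_eq hνf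
    (by simpa only [sub_zero] using hν.hasFinitePotential.tendsto_Ppot_atBot.sub hf0)
  have hST : ν = S + T := hν.hasFinitePotential.eq_of_Ppot_eq (hS.add hT) <| funext fun k => by
    rw [hS.Ppot_add hT, hPT, add_sub_cancel]
  exact ⟨S, hST ▸ Measure.le_add_right le_rfl, rfl⟩

theorem tendsto_integral_max_of_antitone [IsFiniteMeasure η] {f : ℝ → ℝ} (hf : Antitone f)
    (hint : Integrable f η) :
    Tendsto (fun n : ℕ => ∫ x, max (f x) (f n) ∂η) atTop (𝓝 (∫ x, f x ∂η)) := by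
  refine tendsto_integral_of_dominated_convergence (fun x => max |f x| |f 0|)
    (fun n => (hint.sup (integrable_const _)).aestronglyMeasurable)
    (hint.abs.sup (integrable_const _)) (fun n => Eventually.of_forall fun x => ?_)
    (Eventually.of_forall fun x => tendsto_const_nhds.congr' ?_)
  · have hn : f n ≤ f 0 := hf n.cast_nonneg
    exact abs_le.2 ⟨(neg_le_neg (le_max_left _ _)).trans ((neg_abs_le _).trans (le_max_left _ _)),
      max_le_max (le_abs_self _) (hn.trans (le_abs_self _))⟩
  · filter_upwards [eventually_ge_atTop ⌈x⌉₊] with n hn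
    exact (max_eq_left (hf (Nat.ceil_le.1 hn))).symm

theorem leCD_of_Ppot_le (hη : MemM η) (hχ : MemM χ) (huniv : η.real univ = χ.real univ)
    (hP : ∀ k, Ppot η k ≤ Ppot χ k) : LeCD η χ := by
  intro f hf hanti hfη hfχ
  have := hη.1
  have := hχ.1
  refine le_of_tendsto_of_tendsto' (tendsto_integral_max_of_antitone hanti hfη)
    (tendsto_integral_max_of_antitone hanti hfχ) fun n => ?_
  have hmaxη : Integrable (fun x => max (f x) (f n)) η := hfη.sup (integrable_const _)
  have hmaxχ : Integrable (fun x => max (f x) (f n)) χ := hfχ.sup (integrable_const _)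
  have hconv : ConvexOn ℝ univ fun x => max (f x) (f n) - f n :=
    (hf.sup (convexOn_const (f n) convex_univ)).sub (concaveOn_const (f n) convex_univ)
  have hzero : Tendsto (fun x => max (f x) (f n) - f n) atTop (𝓝 0) := by
    refine tendsto_const_nhds.congr' ?_
    filter_upwards [eventually_ge_atTop (n : ℝ)] with x hx
    rw [max_eq_right (hanti hx), sub_self]
  have hle := integral_le_of_Ppot_le hη.hasFinitePotential hχ.hasFinitePotential hP hconv hzero
    (hmaxη.sub (integrable_const _)) (hmaxχ.sub (integrable_const _))
  rwa [integral_sub hmaxη (integrable_const _), integral_sub hmaxχ (integrable_const _),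
    integral_const, integral_const, huniv, sub_le_sub_iff_right] at hle

theorem LeCD.Ppot_le (h : LeCD η χ) (hη : MemM η) (hχ : MemM χ) (k : ℝ) : Ppot η k ≤ Ppot χ k :=
  h _ (convexOn_max_sub_zero k) (antitone_max_sub_zero k) (hη.hasFinitePotential k)
    (hχ.hasFinitePotential k)

theorem LeCD.real_univ_eq (h : LeCD η χ) (hη : MemM η) (hχ : MemM χ) :
    η.real univ = χ.real univ := by
  have := hη.1
  have := hχ.1
  have hconst : ∀ c : ℝ, η.real univ * c ≤ χ.real univ * c := fun c => by
    simpa only [integral_const, smul_eq_mul] using h (fun _ => c) (convexOn_const c convex_univ)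
      antitone_const (integrable_const c) (integrable_const c)
  linarith [hconst 1, hconst (-1)]

theorem leCD_iff (hη : MemM η) (hχ : MemM χ) :
    LeCD η χ ↔ η.real univ = χ.real univ ∧ ∀ k, Ppot η k ≤ Ppot χ k :=
  ⟨fun h => ⟨h.real_univ_eq hη hχ, h.Ppot_le hη hχ⟩, fun h => leCD_of_Ppot_le hη hχ h.1 h.2⟩

theorem LeCD.antisymm (h : LeCD η χ) (h' : LeCD χ η) (hη : MemM η) (hχ : MemM χ) : η = χ :=
  have := hη.1
  hη.hasFinitePotential.eq_of_Ppot_eq hχ.hasFinitePotential <| funext fun k =>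
    (h.Ppot_le hη hχ k).antisymm (h'.Ppot_le hχ hη k)

theorem LePCD.Ppot_le (h : LePCD η χ) (hη : MemM η) (hχ : MemM χ) (k : ℝ) :
    Ppot η k ≤ Ppot χ k :=
  h _ (fun _ => le_max_right _ _) (convexOn_max_sub_zero k) (antitone_max_sub_zero k)
    (hη.hasFinitePotential k) (hχ.hasFinitePotential k)

end Order

section Shadow

variable {μ ν S T : Measure ℝ} {f h : ℝ → ℝ}

theorem IsConvexHullFn.nonneg (hh : IsConvexHullFn f h) (hf : ∀ x, 0 ≤ f x) (x : ℝ) : 0 ≤ h x :=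
  hh.2.2 (fun _ => 0) (convexOn_const 0 convex_univ) hf x

theorem IsConvexHullFn.exists_Ppot_sub_le_add_const
    (hh : IsConvexHullFn (fun k => Ppot ν k - Ppot μ k) h) (hμ : MemM μ) (hν : MemM ν)
    (hP : ∀ k, Ppot μ k ≤ Ppot ν k) : ∃ C, ∀ k, Ppot ν k - h k ≤ Ppot μ k + C := by
  set c := ∫ x, |x| ∂ν + ∫ x, |x| ∂μ
  set a := ν.real univ - μ.real univ with ha
  have ha0 : 0 ≤ a := sub_nonneg.2 <|
    hμ.real_univ_le_of_Ppot_le_add_const hν (C := 0) (by simpa only [add_zero] using hP)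
  have hasymp : ∀ k, |Ppot ν k - Ppot μ k - a * max k 0| ≤ c := fun k => by
    rw [ha, mul_comm, mul_sub, sub_sub_sub_comm]
    exact (abs_sub _ _).trans (add_le_add (hν.abs_Ppot_sub_le k) (hμ.abs_Ppot_sub_le k))
  have hconv : ConvexOn ℝ univ fun k => a * max k 0 - c :=
    (((convexOn_id convex_univ).sup (convexOn_const 0 convex_univ)).smul ha0).sub
      (concaveOn_const c convex_univ)
  have hminorant := hh.2.2 _ hconv fun k => by linarith [(abs_le.1 (hasymp k)).1]
  exact ⟨c + c, fun k => by linarith [hminorant k, (abs_le.1 (hasymp k)).2]⟩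

theorem IsConvexHullFn.exists_le_Ppot_eq_sub
    (hh : IsConvexHullFn (fun k => Ppot ν k - Ppot μ k) h) (hμ : MemM μ) (hν : MemM ν)
    (hP : ∀ k, Ppot μ k ≤ Ppot ν k) : ∃ S ≤ ν, ∀ k, Ppot S k = Ppot ν k - h k := by
  have hν0 := hν.hasFinitePotential.tendsto_Ppot_atBot
  have hh0 : Tendsto h atBot (𝓝 0) :=
    squeeze_zero (hh.nonneg fun k => sub_nonneg.2 (hP k))
      (fun k => (hh.2.1 k).trans (sub_le_self _ (Ppot_nonneg μ k))) hν0
  obtain ⟨S, hSν, hPS⟩ := hν.exists_le_Ppot_eq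
    (hh.convexOn_sub hν.hasFinitePotential.convexOn_Ppot hμ.hasFinitePotential.convexOn_Ppot)
    (by simpa only [sub_sub_cancel] using hh.1) (by simpa only [sub_zero] using hν0.sub hh0)
  exact ⟨S, hSν, congrFun hPS⟩

theorem IsConvexHullFn.leCD (hh : IsConvexHullFn (fun k => Ppot ν k - Ppot μ k) h)
    (hμ : MemM μ) (hν : MemM ν) (hP : ∀ k, Ppot μ k ≤ Ppot ν k) (hS : MemM S)
    (hPS : ∀ k, Ppot S k = Ppot ν k - h k) : LeCD μ S := by
  obtain ⟨C, hC⟩ := hh.exists_Ppot_sub_le_add_const hμ hν hP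
  have hμS : ∀ k, Ppot μ k ≤ Ppot S k := fun k => (hPS k).symm ▸ le_sub_comm.1 (hh.2.1 k)
  exact (leCD_iff hμ hS).2 ⟨(hμ.real_univ_le_of_Ppot_le_add_const hS (C := 0)
    (by simpa only [add_zero] using hμS)).antisymm
    (hS.real_univ_le_of_Ppot_le_add_const hμ fun k => (hPS k).trans_le (hC k)), hμS⟩

theorem IsConvexHullFn.Ppot_sub_le (hh : IsConvexHullFn (fun k => Ppot ν k - Ppot μ k) h)
    (hν : MemM ν) (hTν : T ≤ ν) (hμT : ∀ k, Ppot μ k ≤ Ppot T k) (k : ℝ) :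
    Ppot ν k - h k ≤ Ppot T k :=
  sub_le_comm.1 (hh.2.2 _ (hν.convexOn_Ppot_sub hTν) (fun x => sub_le_sub_left (hμT x) _) k)

theorem IsConvexHullFn.exists_isShadow (hh : IsConvexHullFn (fun k => Ppot ν k - Ppot μ k) h)
    (hμ : MemM μ) (hν : MemM ν) (hP : ∀ k, Ppot μ k ≤ Ppot ν k) :
    ∃ S, IsShadow μ ν S ∧ ∀ k, Ppot S k = Ppot ν k - h k := by
  obtain ⟨S, hSν, hPS⟩ := hh.exists_le_Ppot_eq_sub hμ hν hP
  have hS : MemM S := hν.mono hSν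
  have hμS : LeCD μ S := hh.leCD hμ hν hP hS hPS
  refine ⟨S, ⟨hS, hμS, fun A _ => hSν A, fun T hT hμT hTν => (leCD_iff hS hT).2
    ⟨(hμS.real_univ_eq hμ hS).symm.trans (hμT.real_univ_eq hμ hT), fun k => ?_⟩⟩, hPS⟩
  exact (hPS k).trans_le (hh.Ppot_sub_le hν (Measure.le_iff.2 hTν) (hμT.Ppot_le hμ hT) k)

theorem IsShadow.eq (hS : IsShadow μ ν S) (hT : IsShadow μ ν T) : S = T :=
  have hST : LeCD S T := hS.2.2.2 T hT.1 hT.2.1 hT.2.2.1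
  have hTS : LeCD T S := hT.2.2.2 S hS.1 hS.2.1 hS.2.2.1
  hST.antisymm hTS hS.1 hT.1

end Shadow

/-- Theorem 3.9: the shadow of `μ` in `ν` exists, is unique, and its potential is
`P_{S^ν(μ)} = P_ν - (P_ν - P_μ)^c`. -/
theorem shadow_exists_unique_potential
    (μ ν : MeasureTheory.Measure ℝ) (hμ : MemM μ) (hν : MemM ν)
    (hpcd : LePCD μ ν)
    (h : ℝ → ℝ) (hh : IsConvexHullFn (fun k => Ppot ν k - Ppot μ k) h) :
    (∃! S : MeasureTheory.Measure ℝ, IsShadow μ ν S) ∧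
    (∀ S : MeasureTheory.Measure ℝ, IsShadow μ ν S →
      ∀ k : ℝ, Ppot S k = Ppot ν k - h k) := by
  obtain ⟨S, hS, hPS⟩ := hh.exists_isShadow hμ hν (hpcd.Ppot_le hμ hν)
  exact ⟨⟨S, hS, fun T hT => hT.eq hS⟩, fun T hT => hT.eq hS ▸ hPS⟩
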